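/- arXiv:1411.4058 — 4 statements merged into one kernel-verified Lean document; each statement's English description precedes it below -/
import Mathlib

section
/- Let k ≥ 3 and let M be a k-nestable ordered k-uniform matching with e ≥ 1 edges. Then M is contained in G_{2e−1}^k, i.e., there is an injective, order-preserving map from the vertices of M to the vertices of G_{2e−1}^k sending each edge of M to an edge of G_{2e−1}^k. -/
/-- An ordered hypergraph with vertex set `{1, …, n}` (with its natural order)
and edges given as finite sets of vertices. -/
structure OrderedHypergraph where
  n : ℕ
  edges : Finset (Finset ℕ)

/-- An ordered hypergraph `G` is contained in an ordered hypergraph `H` if there is an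
injective, order-preserving map from the vertices of `G` to the vertices of `H` such that
edges of `G` map to edges of `H`. -/
def OrderedHypergraph.Contains (H G : OrderedHypergraph) : Prop :=
  ∃ f : ℕ → ℕ, StrictMono f ∧ (∀ v ∈ Finset.Icc 1 G.n, f v ∈ Finset.Icc 1 H.n) ∧
    ∀ A ∈ G.edges, A.image f ∈ H.edges

/-- The complete `k`-uniform ordered hypergraph `K_N^k` on the vertex set `{1, …, N}`. -/
def completeHG (k N : ℕ) : OrderedHypergraph :=
  ⟨N, Finset.powersetCard k (Finset.Icc 1 N)⟩

/-- The `i`-colored subgraph of `K_N^k` under the coloring `c`. -/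
def coloredSubgraph (k N : ℕ) {t : ℕ} (c : Finset ℕ → Fin t) (i : Fin t) : OrderedHypergraph :=
  ⟨N, (Finset.powersetCard k (Finset.Icc 1 N)).filter fun A => c A = i⟩

/-- The ordered Ramsey number `OR(G 0, …, G (t-1))` of `k`-uniform ordered hypergraphs:
the minimum `N` such that every `t`-coloring of the edges of `K_N^k` contains, for some
color `i`, a copy of `G i` in the `i`-colored subgraph. -/
noncomputable def ORnum (k : ℕ) {t : ℕ} (G : Fin t → OrderedHypergraph) : ℕ :=
  sInf {N | ∀ c : Finset ℕ → Fin t, ∃ i, (coloredSubgraph k N c i).Contains (G i)}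

/-- The `(k,ℓ)`-path `P_e^{k,ℓ}` with `e` edges: the ordered `k`-uniform hypergraph on
vertex set `{1, …, e(k-ℓ)+ℓ}` with edges `A_r = {(r-1)(k-ℓ)+1, …, (r-1)(k-ℓ)+k}`. -/
def loosePath (k l e : ℕ) : OrderedHypergraph :=
  ⟨e * (k - l) + l,
    (Finset.range e).image fun r => Finset.Icc (r * (k - l) + 1) (r * (k - l) + k)⟩


/-- The ordered `k`-uniform hypergraph `G_s^k`, defined iteratively: `G_0^k` is a single
vertex with no edges, and `G_{s+1}^k` (on vertex set `{1, …, k^{s+1}}`) consists of `k`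
disjoint consecutive copies of `G_s^k` (copy `j` occupying `{j·k^s + 1, …, (j+1)·k^s}`)
together with every `k`-element edge having exactly one vertex in each copy. -/
def iterGraph (k : ℕ) : ℕ → OrderedHypergraph
  | 0 => ⟨1, ∅⟩
  | s + 1 =>
      ⟨k ^ (s + 1),
        ((Finset.range k).biUnion fun j =>
            (iterGraph k s).edges.image fun A => A.image fun x => x + j * k ^ s) ∪
          (Finset.powersetCard k (Finset.Icc 1 (k ^ (s + 1)))).filter fun A =>
            ∀ j ∈ Finset.range k,
              (A ∩ Finset.Icc (j * k ^ s + 1) ((j + 1) * k ^ s)).card = 1⟩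

/-- `M` is an ordered `k`-uniform matching: each edge is a `k`-element subset of the
vertex set `{1, …, M.n}`, and the edges are pairwise disjoint. -/
def IsOrderedMatching (k : ℕ) (M : OrderedHypergraph) : Prop :=
  (∀ A ∈ M.edges, A.card = k ∧ A ⊆ Finset.Icc 1 M.n) ∧
    ∀ A ∈ M.edges, ∀ B ∈ M.edges, A ≠ B → Disjoint A B

/-- The support (vertex set) of a set of edges: the union of the edges. -/
def edgeSupport (E : Finset (Finset ℕ)) : Finset ℕ := E.sup id

/-- A set of edges `E` (of an ordered `k`-uniform matching) is `k`-nestable:  either it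
is empty, or there are `k` disjoint consecutive intervals `I 0 < I 1 < ⋯ < I (k-1)` of
the support (some possibly empty or degenerate) spanning the support, the first
containing the least vertex and the last containing the greatest vertex, such that every
edge is either contained in one of the intervals or has exactly one vertex in each
interval, and for each `j` the set of edges contained in `I j` is itself `k`-nestable. -/
inductive KNestable (k : ℕ) : Finset (Finset ℕ) → Prop where
  | empty : KNestable k ∅
  | nest (E : Finset (Finset ℕ)) (hk : 0 < k) (I : Fin k → Finset ℕ)
      (hord : ∀ j j' : Fin k, j < j' → ∀ x ∈ I j, ∀ y ∈ I j', x < y)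
      (hspan : edgeSupport E = Finset.univ.biUnion fun j => I j)
      (hint : ∀ j : Fin k, ∀ x ∈ I j, ∀ y ∈ I j, ∀ z ∈ edgeSupport E,
        x ≤ z → z ≤ y → z ∈ I j)
      (hfirst : ∀ x ∈ edgeSupport E, ∃ y ∈ I ⟨0, hk⟩, y ≤ x)
      (hlast : ∀ x ∈ edgeSupport E, ∃ y ∈ I ⟨k - 1, Nat.sub_lt hk Nat.one_pos⟩, x ≤ y)
      (hedges : ∀ A ∈ E, (∃ j, A ⊆ I j) ∨ ∀ j, (A ∩ I j).card = 1)
      (hrec : ∀ j : Fin k, KNestable k (E.filter fun A => A ⊆ I j)) :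
      KNestable k E


theorem NM_iterGraph_n (k s : ℕ) : (iterGraph k s).n = k ^ s := by
  cases s <;> simp [iterGraph]

/-- Transversal sets are edges. -/
theorem NM_cross_mem (k s : ℕ) (a : ℕ → ℕ)
    (ha : ∀ j < k, j * k ^ s + 1 ≤ a j ∧ a j ≤ (j + 1) * k ^ s) :
    (Finset.range k).image a ∈ (iterGraph k (s + 1)).edges := by
  have key : ∀ i < k, ∀ j < k, j * k ^ s + 1 ≤ a i → a i ≤ (j + 1) * k ^ s → i = j := by
    intro i hi j hj h1 h2
    obtain ⟨h3, h4⟩ := ha i hi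
    by_contra hne
    rcases Nat.lt_or_gt_of_ne hne with h | h
    · have : (i + 1) * k ^ s ≤ j * k ^ s := Nat.mul_le_mul_right _ h
      omega
    · have : (j + 1) * k ^ s ≤ i * k ^ s := Nat.mul_le_mul_right _ h
      omega
  simp only [iterGraph]
  refine Finset.mem_union_right _ ?_
  simp only [Finset.mem_filter, Finset.mem_powersetCard]
  refine ⟨⟨?_, ?_⟩, ?_⟩
  · intro x hx
    simp only [Finset.mem_image, Finset.mem_range] at hx
    obtain ⟨j, hj, rfl⟩ := hx
    have := ha j hj
    have h2 : (j + 1) * k ^ s ≤ k * k ^ s := Nat.mul_le_mul_right _ hj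
    rw [Finset.mem_Icc, pow_succ, mul_comm (k ^ s)]
    omega
  · rw [Finset.card_image_of_injOn, Finset.card_range]
    intro i hi j hj hij
    have hi : i < k := by simpa using hi
    have hj : j < k := by simpa using hj
    have hij : a i = a j := hij
    refine key i hi j hj ?_ ?_
    · rw [hij]; exact (ha j hj).1
    · rw [hij]; exact (ha j hj).2
  · intro j hj
    have hj : j < k := by simpa using hj
    rw [Finset.card_eq_one]
    refine ⟨a j, ?_⟩
    ext x
    simp only [Finset.mem_inter, Finset.mem_image, Finset.mem_range, Finset.mem_Icc,
      Finset.mem_singleton]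
    constructor
    · rintro ⟨⟨i, hi, rfl⟩, h1, h2⟩
      rw [key i hi j hj h1 h2]
    · rintro rfl
      exact ⟨⟨j, hj, rfl⟩, ha j hj⟩

theorem NM_shift_mem (k s j : ℕ) (hj : j < k) (A : Finset ℕ) (hA : A ∈ (iterGraph k s).edges) :
    (A.image fun x => x + j * k ^ s) ∈ (iterGraph k (s + 1)).edges := by
  simp only [iterGraph]
  refine Finset.mem_union_left _ ?_
  rw [Finset.mem_biUnion]
  exact ⟨j, by simpa using hj, Finset.mem_image_of_mem _ hA⟩

theorem NM_edge_cases (k s : ℕ) (A : Finset ℕ) (hA : A ∈ (iterGraph k (s + 1)).edges) :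
    (∃ j < k, ∃ B ∈ (iterGraph k s).edges, A = B.image fun x => x + j * k ^ s) ∨
    ∃ a : ℕ → ℕ, (∀ j < k, j * k ^ s + 1 ≤ a j ∧ a j ≤ (j + 1) * k ^ s) ∧
      A = (Finset.range k).image a := by
  simp only [iterGraph] at hA
  rcases Finset.mem_union.1 hA with h | h
  · left
    simp only [Finset.mem_biUnion, Finset.mem_range, Finset.mem_image] at h
    obtain ⟨j, hj, B, hB, rfl⟩ := h
    exact ⟨j, hj, B, hB, rfl⟩
  · right
    simp only [Finset.mem_filter, Finset.mem_powersetCard, Finset.mem_range] at h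
    obtain ⟨⟨h1, h2⟩, h3⟩ := h
    have h4 : ∀ j, ∃ x, j < k → A ∩ Finset.Icc (j * k ^ s + 1) ((j + 1) * k ^ s) = {x} := by
      intro j
      by_cases hj : j < k
      · obtain ⟨x, hx⟩ := Finset.card_eq_one.1 (h3 j hj)
        exact ⟨x, fun _ => hx⟩
      · exact ⟨0, fun h => absurd h hj⟩
    choose a ha using h4
    have h5 : ∀ j < k, a j ∈ A ∧ j * k ^ s + 1 ≤ a j ∧ a j ≤ (j + 1) * k ^ s := by
      intro j hj
      have : a j ∈ A ∩ Finset.Icc (j * k ^ s + 1) ((j + 1) * k ^ s) := by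
        rw [ha j hj]; simp
      simpa using this
    refine ⟨a, fun j hj => (h5 j hj).2, ?_⟩
    ext x
    simp only [Finset.mem_image, Finset.mem_range]
    constructor
    · intro hx
      have hx1 := h1 hx
      rw [Finset.mem_Icc] at hx1
      have hpos : 0 < k ^ s := by
        rcases Nat.eq_zero_or_pos (k ^ s) with h0 | h0
        · rw [pow_succ, h0] at hx1; omega
        · exact h0
      have hd : k ^ s * ((x - 1) / k ^ s) + (x - 1) % k ^ s = x - 1 := Nat.div_add_mod _ _
      have hm := Nat.mod_lt (x - 1) hpos
      have hjk : (x - 1) / k ^ s < k := by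
        rw [Nat.div_lt_iff_lt_mul hpos, ← pow_succ']
        omega
      refine ⟨(x - 1) / k ^ s, hjk, ?_⟩
      have : x ∈ A ∩ Finset.Icc ((x - 1) / k ^ s * k ^ s + 1)
          (((x - 1) / k ^ s + 1) * k ^ s) := by
        rw [Finset.mem_inter, Finset.mem_Icc, add_mul, mul_comm _ (k ^ s)]
        generalize (x - 1) % k ^ s = r at hd hm
        generalize k ^ s * ((x - 1) / k ^ s) = p at hd ⊢
        refine ⟨hx, ?_, ?_⟩ <;> omega
      rw [ha _ hjk, Finset.mem_singleton] at this
      exact this.symm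
    · rintro ⟨j, hj, rfl⟩
      exact (h5 j hj).1

/-- Blow-up: replacing each vertex by a vertex of its block of size `k`. -/
theorem NM_blowup (k s : ℕ) : ∀ (A : Finset ℕ) (_ : A ∈ (iterGraph k s).edges) (φ : ℕ → ℕ)
    (_ : ∀ x ∈ A, 1 ≤ x ∧ (x - 1) * k + 1 ≤ φ x ∧ φ x ≤ x * k),
    A.image φ ∈ (iterGraph k (s + 1)).edges := by
  induction s with
  | zero => intro A hA; simp [iterGraph] at hA
  | succ s ih =>
    intro A hA φ hφ
    rcases NM_edge_cases k s A hA with ⟨j, hj, B, hB, rfl⟩ | ⟨a, ha, rfl⟩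
    · have hB1 : ∀ x ∈ B, 1 ≤ x := by
        have : ∀ (t : ℕ) (B : Finset ℕ), B ∈ (iterGraph k t).edges → ∀ x ∈ B, 1 ≤ x := by
          intro t
          induction t with
          | zero => intro B hB; simp [iterGraph] at hB
          | succ t iht =>
            intro B hB x hx
            rcases NM_edge_cases k t B hB with ⟨j, hj, B', hB', rfl⟩ | ⟨a, ha, rfl⟩
            · obtain ⟨y, hy, rfl⟩ := Finset.mem_image.1 hx
              have := iht B' hB' y hy
              omega
            · obtain ⟨y, hy, rfl⟩ := Finset.mem_image.1 hx
              have := ha y (by simpa using hy)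
              omega
        exact this s B hB
      have hb : ∀ x ∈ B, 1 ≤ x ∧ (x - 1) * k + 1 + j * k ^ (s + 1) ≤ φ (x + j * k ^ s) ∧
          φ (x + j * k ^ s) ≤ x * k + j * k ^ (s + 1) := by
        intro x hx
        have h1 := hB1 x hx
        obtain ⟨_, h2, h3⟩ := hφ (x + j * k ^ s) (Finset.mem_image_of_mem _ hx)
        have e1 : x + j * k ^ s - 1 = (x - 1) + j * k ^ s := by omega
        have e2 : ∀ y, (y + j * k ^ s) * k = y * k + j * k ^ (s + 1) := by intro y; ring
        rw [e1, e2] at h2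
        rw [e2] at h3
        refine ⟨h1, by omega, h3⟩
      have := NM_shift_mem k (s + 1) j hj _
        (ih B hB (fun x => φ (x + j * k ^ s) - j * k ^ (s + 1)) (by
          intro x hx
          obtain ⟨h1, h2, h3⟩ := hb x hx
          refine ⟨h1, ?_, ?_⟩ <;> omega))
      convert this using 1
      rw [Finset.image_image, Finset.image_image]
      refine Finset.image_congr ?_
      intro x hx
      obtain ⟨h1, h2, h3⟩ := hb x hx
      simp only [Function.comp]
      omega
    · rw [Finset.image_image]
      refine NM_cross_mem k (s + 1) _ ?_
      intro j hj
      obtain ⟨h1, h2⟩ := ha j hj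
      obtain ⟨h3, h4, h5⟩ := hφ (a j) (Finset.mem_image_of_mem _ (by simpa using hj))
      simp only [Function.comp]
      have h6 : j * k ^ s * k ≤ (a j - 1) * k := Nat.mul_le_mul_right _ (by omega)
      have h7 : a j * k ≤ (j + 1) * k ^ s * k := Nat.mul_le_mul_right _ h2
      rw [pow_succ, ← mul_assoc, ← mul_assoc]
      omega

/-- Vertices `S` together with the edges `E` embed in `G_s^k`. -/
def NM_Emb (k : ℕ) (S : Finset ℕ) (E : Finset (Finset ℕ)) (s : ℕ) : Prop :=
  ∃ f : ℕ → ℕ, (∀ x ∈ S, ∀ y ∈ S, x < y → f x < f y) ∧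
    (∀ x ∈ S, 1 ≤ f x ∧ f x ≤ k ^ s) ∧ ∀ A ∈ E, A.image f ∈ (iterGraph k s).edges

theorem NM_Emb_succ {k : ℕ} (hk : 2 ≤ k) {S E s} (h : NM_Emb k S E s) : NM_Emb k S E (s + 1) := by
  obtain ⟨f, h1, h2, h3⟩ := h
  refine ⟨f, h1, fun x hx => ⟨(h2 x hx).1, (h2 x hx).2.trans
    (Nat.pow_le_pow_right (by omega) (by omega))⟩, fun A hA => ?_⟩
  have := NM_shift_mem k s 0 (by omega) _ (h3 A hA)
  simpa using this

theorem NM_Emb_mono {k : ℕ} (hk : 2 ≤ k) {S E s t} (h : NM_Emb k S E s) (hst : s ≤ t) :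
    NM_Emb k S E t := by
  induction hst with
  | refl => exact h
  | step _ ih => exact NM_Emb_succ hk ih

theorem NM_Emb_insert {k : ℕ} (hk : 2 ≤ k) {S E s} (h : NM_Emb k S E s)
    (hE : ∀ A ∈ E, A ⊆ S) (v : ℕ) (hv : v ∉ S) : NM_Emb k (insert v S) E (s + 1) := by
  obtain ⟨f, h1, h2, h3⟩ := h
  have hpos : 0 < k ^ s := Nat.pow_pos (by omega)
  let g : ℕ → ℕ := fun x => if x < v then (f x - 1) * k + 1 else (f x - 1) * k + 2
  have hstep : ∀ x ∈ S, ∀ y ∈ S, x < y → (f x - 1) * k + k ≤ (f y - 1) * k := by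
    intro x hx y hy hxy
    have := h1 x hx y hy hxy
    have h4 := h2 x hx
    calc (f x - 1) * k + k = (f x - 1 + 1) * k := by ring
      _ ≤ _ := Nat.mul_le_mul_right _ (by omega)
  have htop : ∀ x ∈ S, (f x - 1) * k + k = f x * k ∧ f x * k ≤ k ^ (s + 1) := by
    intro x hx
    have h4 := h2 x hx
    refine ⟨?_, ?_⟩
    · calc (f x - 1) * k + k = (f x - 1 + 1) * k := by ring
        _ = _ := by congr 1; omega
    · rw [pow_succ]; exact Nat.mul_le_mul_right _ h4.2
  have ha : ∃ a, 1 ≤ a ∧ a ≤ k ^ (s + 1) ∧ (∀ x ∈ S, x < v → (f x - 1) * k + 1 < a) ∧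
      (∀ x ∈ S, v < x → a < (f x - 1) * k + 2) := by
    by_cases hne : (S.filter (· < v)).Nonempty
    · obtain ⟨u, hu, hmax⟩ := Finset.exists_max_image _ id hne
      simp only [Finset.mem_filter, id] at hu hmax
      refine ⟨(f u - 1) * k + 2, by omega, ?_, ?_, ?_⟩
      · have := htop u hu.1
        omega
      · intro x hx hxv
        rcases Nat.lt_or_ge x u with h | h
        · have := hstep x hx u hu.1 h
          omega
        · have : x = u := le_antisymm (hmax x ⟨hx, hxv⟩) h
          subst this; omega
      · intro x hx hxv
        have := hstep u hu.1 x hx (by omega)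
        omega
    · refine ⟨1, le_rfl, Nat.pow_pos (by omega), ?_, ?_⟩
      · intro x hx hxv
        exact absurd ⟨x, Finset.mem_filter.2 ⟨hx, hxv⟩⟩ hne
      · intro x hx hxv
        omega
  obtain ⟨a, ha1, ha2, ha3, ha4⟩ := ha
  let G : ℕ → ℕ := fun x => if x = v then a else g x
  have hG : ∀ x ∈ S, G x = g x := by
    intro x hx
    have : x ≠ v := fun h => hv (h ▸ hx)
    simp [G, this]
  have hgb : ∀ x, (f x - 1) * k + 1 ≤ g x ∧ g x ≤ (f x - 1) * k + 2 := by
    intro x; simp only [g]; split_ifs <;> omega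
  refine ⟨G, ?_, ?_, ?_⟩
  · intro x hx y hy hxy
    rcases Finset.mem_insert.1 hx with rfl | hxS
    · rcases Finset.mem_insert.1 hy with rfl | hy
      · omega
      · rw [hG y hy]
        have := ha4 y hy hxy
        have h5 : ¬ y < x := by omega
        simpa [G, g, h5] using this
    · rcases Finset.mem_insert.1 hy with rfl | hy
      · rw [hG x hxS]
        have := ha3 x hxS hxy
        simpa [G, g, hxy] using this
      · rw [hG x hxS, hG y hy]
        have := hstep x hxS y hy hxy
        have h5 := hgb x
        have h6 := hgb y
        omega
  · intro x hx
    rcases Finset.mem_insert.1 hx with rfl | hx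
    · simpa [G] using ⟨ha1, ha2⟩
    · rw [hG x hx]
      have h5 := hgb x
      have := htop x hx
      omega
  · intro A hA
    have hinj : Set.InjOn f A := by
      intro x hx y hy hxy
      rcases Nat.lt_trichotomy x y with h | h | h
      · have := h1 x (hE A hA hx) y (hE A hA hy) h; omega
      · exact h
      · have := h1 y (hE A hA hy) x (hE A hA hx) h; omega
    have := NM_blowup k s _ (h3 A hA) (fun z => G (Function.invFunOn f A z)) (by
      intro z hz
      obtain ⟨x, hx, rfl⟩ := Finset.mem_image.1 hz
      have hxS := hE A hA hx
      have e : Function.invFunOn f A (f x) = x := hinj.leftInvOn_invFunOn hx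
      rw [e, hG x hxS]
      have h5 := hgb x
      have := htop x hxS
      have := h2 x hxS
      omega)
    rw [Finset.image_image] at this
    convert this using 1
    refine Finset.image_congr ?_
    intro x hx
    have e : Function.invFunOn f A (f x) = x := hinj.leftInvOn_invFunOn hx
    simp only [Function.comp, e]

theorem NM_Emb_union {k : ℕ} (hk : 2 ≤ k) {S E s} (h : NM_Emb k S E s)
    (hE : ∀ A ∈ E, A ⊆ S) (T : Finset ℕ) : Disjoint T S → NM_Emb k (T ∪ S) E (s + T.card) := by
  induction T using Finset.induction_on with
  | empty => intro _; simpa using h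
  | insert v T hv ih =>
    intro hd
    rw [Finset.disjoint_insert_left] at hd
    rw [Finset.card_insert_of_notMem hv, ← add_assoc, Finset.insert_union]
    refine NM_Emb_insert hk (ih hd.2) (fun A hA => (hE A hA).trans Finset.subset_union_right) v ?_
    simp [hv, hd.1]

theorem NM_Emb_free {k : ℕ} (hk : 2 ≤ k) (S : Finset ℕ) : NM_Emb k S ∅ (S.card - 1) := by
  rcases S.eq_empty_or_nonempty with rfl | ⟨v, hv⟩
  · exact ⟨id, by simp, by simp, by simp⟩
  · have h0 : NM_Emb k {v} ∅ 0 := ⟨fun _ => 1, by simp, by simp, by simp⟩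
    have := NM_Emb_union hk h0 (by simp) (S.erase v) (by simp)
    rw [Finset.card_erase_of_mem hv, Nat.zero_add] at this
    convert this using 1
    ext x
    by_cases hx : x = v <;> simp [hx, hv]

theorem NM_mem_supp (E : Finset (Finset ℕ)) (x : ℕ) : x ∈ edgeSupport E ↔ ∃ A ∈ E, x ∈ A := by
  simp [edgeSupport, Finset.mem_sup]

/-- Gluing embeddings of the intervals. -/
theorem NM_glue {k s : ℕ} (E : Finset (Finset ℕ)) (I : Fin k → Finset ℕ)
    (hord : ∀ j j' : Fin k, j < j' → ∀ x ∈ I j, ∀ y ∈ I j', x < y)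
    (hspan : edgeSupport E = Finset.univ.biUnion fun j => I j)
    (hedges : ∀ A ∈ E, (∃ j, A ⊆ I j) ∨ ∀ j, (A ∩ I j).card = 1)
    (h : ∀ j, NM_Emb k (I j) (E.filter fun A => A ⊆ I j) s) :
    NM_Emb k (edgeSupport E) E (s + 1) := by
  choose g h1 h2 h3 using h
  have huniq : ∀ i j x, x ∈ I i → x ∈ I j → i = j := by
    intro i j x hi hj
    rcases lt_trichotomy i j with h | h | h
    · exact absurd (hord _ _ h x hi x hj) (lt_irrefl _)
    · exact h
    · exact absurd (hord _ _ h x hj x hi) (lt_irrefl _)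
  have hF : ∃ F : ℕ → ℕ, ∀ j, ∀ x ∈ I j, F x = g j x + j.val * k ^ s := by
    classical
    refine ⟨fun x => if h : ∃ j, x ∈ I j then
      g h.choose x + h.choose.val * k ^ s else 0, ?_⟩
    intro j x hx
    have h : ∃ j, x ∈ I j := ⟨j, hx⟩
    have e := huniq _ _ x h.choose_spec hx
    dsimp only
    rw [dif_pos h, e]
  obtain ⟨F, hF⟩ := hF
  have hmem : ∀ x ∈ edgeSupport E, ∃ j, x ∈ I j := by
    intro x hx
    rw [hspan] at hx
    simpa using hx
  have hb : ∀ j, ∀ x ∈ I j, j.val * k ^ s + 1 ≤ F x ∧ F x ≤ (j.val + 1) * k ^ s := by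
    intro j x hx
    have := h2 j x hx
    rw [hF j x hx, add_mul]
    omega
  refine ⟨F, ?_, ?_, ?_⟩
  · intro x hx y hy hxy
    obtain ⟨i, hi⟩ := hmem x hx
    obtain ⟨j, hj⟩ := hmem y hy
    rcases lt_trichotomy i j with h | h | h
    · have h4 := hb i x hi
      have h5 := hb j y hj
      have : (i.val + 1) * k ^ s ≤ j.val * k ^ s := Nat.mul_le_mul_right _ h
      omega
    · subst h
      have := h1 i x hi y hj hxy
      rw [hF i x hi, hF i y hj]
      omega
    · have := hord _ _ h y hj x hi
      omega
  · intro x hx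
    obtain ⟨i, hi⟩ := hmem x hx
    have h4 := hb i x hi
    have : (i.val + 1) * k ^ s ≤ k * k ^ s := Nat.mul_le_mul_right _ i.isLt
    rw [pow_succ, mul_comm (k ^ s)]
    omega
  · intro A hA
    rcases hedges A hA with ⟨j, hj⟩ | hc
    · have := NM_shift_mem k s j j.isLt _ (h3 j A (Finset.mem_filter.2 ⟨hA, hj⟩))
      rw [Finset.image_image] at this
      convert this using 1
      refine Finset.image_congr ?_
      intro x hx
      exact hF j x (hj hx)
    · have hc' : ∀ j, ∃ x, A ∩ I j = {x} := fun j => Finset.card_eq_one.1 (hc j)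
      choose a ha using hc'
      have ha' : ∀ j, a j ∈ A ∧ a j ∈ I j := by
        intro j
        have : a j ∈ A ∩ I j := by rw [ha j]; simp
        simpa using this
      have := NM_cross_mem k s (fun j => if h : j < k then F (a ⟨j, h⟩) else 0) (by
        intro j hj
        simp only [hj, dif_pos]
        exact hb ⟨j, hj⟩ _ (ha' _).2)
      convert this using 1
      ext y
      simp only [Finset.mem_image, Finset.mem_range]
      constructor
      · rintro ⟨x, hx, rfl⟩
        obtain ⟨j, hj⟩ := hmem x ((NM_mem_supp E x).2 ⟨A, hA, hx⟩)
        have : x ∈ A ∩ I j := Finset.mem_inter.2 ⟨hx, hj⟩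
        rw [ha j, Finset.mem_singleton] at this
        refine ⟨j, j.isLt, ?_⟩
        simp [this]
      · rintro ⟨j, hj, rfl⟩
        refine ⟨a ⟨j, hj⟩, (ha' _).1, ?_⟩
        simp [hj]

theorem NM_main {k : ℕ} (hk2 : 2 ≤ k) (E : Finset (Finset ℕ)) (h : KNestable k E) :
    (∀ A ∈ E, A.Nonempty) → E.Nonempty → NM_Emb k (edgeSupport E) E (2 * E.card - 1) := by
  induction h with
  | empty => intro _ h; simp at h
  | nest E hk I hord hspan hint hfirst hlast hedges hrec ih =>
    intro hne hE
    have hEpos := hE.card_pos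
    have e1 : 2 * E.card - 1 = (2 * E.card - 2) + 1 := by omega
    rw [e1]
    refine NM_glue E I hord hspan hedges ?_
    intro j
    have huniq : ∀ i j x, x ∈ I i → x ∈ I j → i = j := by
      intro i j x hi hj
      rcases lt_trichotomy i j with h | h | h
      · exact absurd (hord _ _ h x hi x hj) (lt_irrefl _)
      · exact h
      · exact absurd (hord _ _ h x hj x hi) (lt_irrefl _)
    classical
    set C := E.filter fun A => ¬ ∃ i, A ⊆ I i with hC
    set Ej := E.filter fun A => A ⊆ I j with hEj
    set T := I j \ edgeSupport Ej with hT
    have hsub : edgeSupport Ej ⊆ I j := by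
      intro x hx
      obtain ⟨A, hA, hxA⟩ := (NM_mem_supp _ x).1 hx
      exact (Finset.mem_filter.1 hA).2 hxA
    have hTC : T.card ≤ C.card := by
      have hsubT : T ⊆ C.biUnion fun A => A ∩ I j := by
        intro x hx
        rw [hT, Finset.mem_sdiff] at hx
        have hxs : x ∈ edgeSupport E := by
          rw [hspan]; exact Finset.mem_biUnion.2 ⟨j, Finset.mem_univ _, hx.1⟩
        obtain ⟨A, hA, hxA⟩ := (NM_mem_supp _ x).1 hxs
        refine Finset.mem_biUnion.2 ⟨A, ?_, Finset.mem_inter.2 ⟨hxA, hx.1⟩⟩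
        refine Finset.mem_filter.2 ⟨hA, ?_⟩
        rintro ⟨i, hi⟩
        have := huniq i j x (hi hxA) hx.1
        subst this
        exact hx.2 ((NM_mem_supp _ x).2 ⟨A, Finset.mem_filter.2 ⟨hA, hi⟩, hxA⟩)
      calc T.card ≤ _ := Finset.card_le_card hsubT
        _ ≤ C.card * 1 := Finset.card_biUnion_le_card_mul _ _ _ (by
          intro A hA
          rw [hC, Finset.mem_filter] at hA
          rcases hedges A hA.1 with h | h
          · exact absurd h hA.2
          · exact (h j).le)
        _ = _ := mul_one _
    have hsum : Ej.card + C.card ≤ E.card := by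
      rw [← Finset.card_union_of_disjoint]
      · exact Finset.card_le_card (Finset.union_subset (Finset.filter_subset _ _)
          (Finset.filter_subset _ _))
      · rw [Finset.disjoint_left]
        intro A h1 h2
        exact (Finset.mem_filter.1 h2).2 ⟨j, (Finset.mem_filter.1 h1).2⟩
    have hlt : Ej.card = E.card → C.card ≠ 0 := by
      intro hcard hC0
      have hEE : Ej = E := Finset.eq_of_subset_of_card_le (Finset.filter_subset _ _) hcard.ge
      obtain ⟨A, hA⟩ := hE
      obtain ⟨x, hx⟩ := hne A hA
      have hxs := (NM_mem_supp E x).2 ⟨A, hA, hx⟩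
      obtain ⟨y, hy, _⟩ := hfirst x hxs
      obtain ⟨z, hz, _⟩ := hlast x hxs
      have hall : ∀ i, ∀ w ∈ I i, i = j := by
        intro i w hw
        have : w ∈ edgeSupport E := by
          rw [hspan]; exact Finset.mem_biUnion.2 ⟨i, Finset.mem_univ _, hw⟩
        rw [← hEE] at this
        exact huniq i j w hw (hsub this)
      have h1 := hall _ y hy
      have h2 := hall _ z hz
      rw [← h1] at h2
      have := congrArg Fin.val h2
      simp at this
      omega
    have hunion : T ∪ edgeSupport Ej = I j := Finset.sdiff_union_of_subset hsub
    rcases Ej.eq_empty_or_nonempty with h0 | h0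
    · rw [h0]
      refine NM_Emb_mono hk2 (NM_Emb_free hk2 (I j)) ?_
      have : T = I j := by rw [hT, h0]; simp [edgeSupport]
      rw [← this]
      omega
    · have h5 := NM_Emb_union hk2 (ih j (fun A hA => hne A (Finset.mem_filter.1 hA).1) h0)
        (fun A hA x hx => (NM_mem_supp _ x).2 ⟨A, hA, hx⟩) T Finset.sdiff_disjoint
      have h6 : NM_Emb k (T ∪ edgeSupport Ej) Ej (2 * Ej.card - 1 + T.card) := h5
      rw [hunion] at h6
      refine NM_Emb_mono hk2 h6 ?_
      have := h0.card_pos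
      omega

/-- For `k ≥ 3`, a `k`-nestable ordered `k`-uniform matching `M` with
`e ≥ 1` edges (on vertex set `{1, …, ke}`, which its edges partition) is contained in
`G_{2e-1}^k`. -/
theorem nestable_matching_in_iterGraph (k e : ℕ) (hk : 3 ≤ k) (he : 1 ≤ e)
    (M : OrderedHypergraph) (hn : M.n = k * e) (hecard : M.edges.card = e)
    (huniform : ∀ A ∈ M.edges, A.card = k)
    (hdisj : ∀ A ∈ M.edges, ∀ B ∈ M.edges, A ≠ B → Disjoint A B)
    (hsupp : edgeSupport M.edges = Finset.Icc 1 (k * e))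
    (hnest : KNestable k M.edges) :
    (iterGraph k (2 * e - 1)).Contains M := by
  have hne : ∀ A ∈ M.edges, A.Nonempty := by
    intro A hA
    rw [← Finset.card_pos, huniform A hA]; omega
  have hE : M.edges.Nonempty := by rw [← Finset.card_pos]; omega
  obtain ⟨f, h1, h2, h3⟩ := NM_main (by omega) M.edges hnest hne hE
  rw [hecard] at h2 h3
  rw [hsupp] at h1 h2
  let F : ℕ → ℕ := fun x => if x = 0 then 0 else if x ≤ k * e then f x else k ^ (2 * e - 1) + x
  have hF : ∀ x ∈ Finset.Icc 1 (k * e), F x = f x := by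
    intro x hx
    rw [Finset.mem_Icc] at hx
    have : x ≠ 0 := by omega
    simp [F, hx.2, this]
  refine ⟨F, ?_, ?_, ?_⟩
  · intro x y hxy
    have hxx := h2 x
    have hyy := h2 y
    have hh := h1 x
    have hh2 := fun hx => hh hx y
    simp only [Finset.mem_Icc] at hxx hyy hh2
    simp only [F]
    generalize k * e = n at *
    split_ifs with a b c d
    · omega
    · have := hyy ⟨by omega, by omega⟩; omega
    · omega
    · omega
    · exact hh2 ⟨by omega, by omega⟩ ⟨by omega, by omega⟩ hxy
    · have := hxx ⟨by omega, by omega⟩; omega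
    · omega
    · omega
    · omega
  · intro v hv
    rw [hn] at hv
    rw [hF v hv, NM_iterGraph_n, Finset.mem_Icc]
    exact h2 v hv
  · intro A hA
    convert h3 A hA using 1
    refine Finset.image_congr ?_
    intro x hx
    refine hF x ?_
    rw [← hsupp, NM_mem_supp]
    exact ⟨A, hA, hx⟩
end

section
/- Let k ≥ 3, e ≥ 2, t ≥ 1, and let M be a k-nestable ordered k-uniform matching with e edges. Then OR_t(M) ≤ (ek)^{(2e−1)^{t−1}}. -/
/-- `A` is an edge of the iterated graph of depth `s` (0-indexed, described by base `k`
digits). -/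
def TreeEdge (k s : ℕ) (A : Finset ℕ) : Prop :=
  ∃ l < s, ∃ q, A.image (fun x => x / k ^ l) = Finset.Ico (q * k) (q * k + k)

lemma mem_edgeSupport {E : Finset (Finset ℕ)} {x : ℕ} :
    x ∈ edgeSupport E ↔ ∃ A ∈ E, x ∈ A := by
  simp [edgeSupport, Finset.mem_sup]

/-- Refining: insert at most `p` markers into an embedding of depth `d`. -/
lemma insert_markers (k d r p : ℕ) (hr : p + 2 ≤ k ^ r) (E : Finset (Finset ℕ))
    (I : Finset ℕ) (hI : (I \ edgeSupport E).card ≤ p)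
    (f : ℕ → ℕ) (hf : StrictMonoOn f (edgeSupport E : Set ℕ))
    (hlt : ∀ x ∈ edgeSupport E, f x < k ^ d)
    (hE : ∀ A ∈ E, TreeEdge k d (A.image f)) :
    ∃ g : ℕ → ℕ, StrictMonoOn g (I : Set ℕ) ∧ (∀ x ∈ I, g x < k ^ (d + r)) ∧
      ∀ A ∈ E, TreeEdge k (d + r) (A.image g) := by
  set S := edgeSupport E with hS
  set P := I \ S with hP
  set K := k ^ r with hK
  have hkpos : 0 < k := by
    rcases Nat.eq_zero_or_pos k with h | h
    · subst h
      rcases Nat.eq_zero_or_pos r with h' | h'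
      · subst h'; simp at hK; omega
      · rw [zero_pow (by omega)] at hK; omega
    · exact h
  let B : ℕ → ℕ := fun x => (S.filter (· ≤ x)).sup (fun y => f y * K + 1)
  let m : ℕ → ℕ := fun x => (P.filter (· ≤ x)).card
  have hm : ∀ x, m x ≤ p := fun x => (Finset.card_le_card (Finset.filter_subset _ _)).trans hI
  have mmono : ∀ x y, x ≤ y → m x ≤ m y := by
    intro x y h
    apply Finset.card_le_card
    intro z hz
    simp only [Finset.mem_filter] at hz ⊢
    exact ⟨hz.1, hz.2.trans h⟩
  have mstrict : ∀ x y, x < y → y ∈ P → m x < m y := by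
    intro x y h hy
    apply Finset.card_lt_card
    refine Finset.ssubset_iff_of_subset ?_ |>.2 ⟨y, ?_, ?_⟩
    · intro z hz
      simp only [Finset.mem_filter] at hz ⊢
      exact ⟨hz.1, hz.2.trans h.le⟩
    · simp [hy]
    · simp [h]
  have Bmono : ∀ x y, x ≤ y → B x ≤ B y := by
    intro x y h
    apply Finset.sup_mono
    intro z hz
    simp only [Finset.mem_filter] at hz ⊢
    exact ⟨hz.1, hz.2.trans h⟩
  have BS : ∀ x ∈ S, B x = f x * K + 1 := by
    intro x hx
    apply le_antisymm
    · apply Finset.sup_le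
      intro y hy
      simp only [Finset.mem_filter] at hy
      have := hf.monotoneOn (by exact_mod_cast hy.1) (by exact_mod_cast hx) hy.2
      have := Nat.mul_le_mul_right K this
      omega
    · exact Finset.le_sup (f := fun y => f y * K + 1) (by simp [hx])
  have key : ∀ x y, x < y → y ∈ S → B x + m x < B y + m y := by
    intro x y h hy
    rw [BS y hy]
    have h3 := mmono x y h.le
    have h4 := hm x
    have h5 : B x + K ≤ f y * K + 1 ∨ B x = 0 := by
      by_cases hne : (S.filter (· ≤ x)).Nonempty
      · left
        obtain ⟨z, hz, hzB⟩ := Finset.exists_mem_eq_sup _ hne (fun y => f y * K + 1)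
        simp only [Finset.mem_filter] at hz
        have h1 := hf (by exact_mod_cast hz.1) (by exact_mod_cast hy) (hz.2.trans_lt h)
        have h2 := Nat.mul_le_mul_right K (Nat.succ_le_of_lt h1)
        rw [Nat.succ_mul] at h2
        have : B x = f z * K + 1 := hzB
        omega
      · right
        rw [Finset.not_nonempty_iff_eq_empty] at hne
        simp [B, hne]
    omega
  refine ⟨fun x => B x + m x, ?_, ?_, ?_⟩
  · intro x hx y hy hxy
    by_cases hyS : y ∈ S
    · exact key x y hxy hyS
    · have hyP : y ∈ P := by simp only [hP, Finset.mem_sdiff]; exact ⟨by exact_mod_cast hy, hyS⟩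
      have := mstrict x y hxy hyP
      have := Bmono x y hxy.le
      show B x + m x < B y + m y
      omega
  · intro x hx
    show B x + m x < _
    have h4 := hm x
    have hB : B x + K ≤ k ^ (d + r) + 1 := by
      by_cases hne : (S.filter (· ≤ x)).Nonempty
      · obtain ⟨z, hz, hzB⟩ := Finset.exists_mem_eq_sup _ hne (fun y => f y * K + 1)
        simp only [Finset.mem_filter] at hz
        have h2 := Nat.mul_le_mul_right K (Nat.succ_le_of_lt (hlt z hz.1))
        rw [Nat.succ_mul] at h2
        have : B x = f z * K + 1 := hzB
        rw [pow_add, ← hK]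
        omega
      · rw [Finset.not_nonempty_iff_eq_empty] at hne
        have : B x = 0 := by simp [B, hne]
        have : K ≤ k ^ (d + r) := Nat.pow_le_pow_right hkpos (by omega)
        omega
    omega
  · intro A hA
    obtain ⟨l, hl, q, hq⟩ := hE A hA
    refine ⟨l + r, by omega, q, ?_⟩
    rw [← hq, Finset.image_image, Finset.image_image]
    apply Finset.image_congr
    intro x hx
    have hxS : x ∈ S := mem_edgeSupport.2 ⟨A, hA, by exact_mod_cast hx⟩
    show (B x + m x) / k ^ (l + r) = f x / k ^ l
    have h4 := hm x
    rw [BS x hxS, add_comm l r, pow_add, ← Nat.div_div_eq_div_mul]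
    congr 1
    have : f x * K + 1 + m x = (1 + m x) + K * f x := by ring
    rw [this, Nat.add_mul_div_left _ _ (by omega), Nat.div_eq_of_lt (by omega), zero_add]

lemma pow_bound (k q : ℕ) (hk : 3 ≤ k) (hq : 1 ≤ q) : q + 2 ≤ k ^ (2 * q - 1) := by
  obtain ⟨n, rfl⟩ : ∃ n, q = n + 1 := ⟨q - 1, by omega⟩
  have h1 : 3 ^ (2 * (n + 1) - 1) ≤ k ^ (2 * (n + 1) - 1) := Nat.pow_le_pow_left hk _
  refine le_trans ?_ h1
  clear hq h1
  induction n with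
  | zero => norm_num
  | succ n ih =>
    have : 2 * (n + 1 + 1) - 1 = 2 * (n + 1) - 1 + 2 := by omega
    rw [this, pow_add]
    omega

/-- One interval of the decomposition. -/
lemma interval_embed (k e p : ℕ) (hk : 3 ≤ k) (F : Finset (Finset ℕ)) (I : Finset ℕ)
    (hFe : F.card < e) (hp : F.card + p ≤ e) (hI : (I \ edgeSupport F).card ≤ p)
    (ih : F.Nonempty → ∃ f : ℕ → ℕ, StrictMonoOn f (edgeSupport F : Set ℕ) ∧
      (∀ x ∈ edgeSupport F, f x < k ^ (2 * F.card - 1)) ∧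
      ∀ A ∈ F, TreeEdge k (2 * F.card - 1) (A.image f)) :
    ∃ g : ℕ → ℕ, StrictMonoOn g (I : Set ℕ) ∧ (∀ x ∈ I, g x < k ^ (2 * e - 2)) ∧
      ∀ A ∈ F, TreeEdge k (2 * e - 2) (A.image g) := by
  rcases F.eq_empty_or_nonempty with rfl | hne
  · refine ⟨fun x => (I.filter (· < x)).card, ?_, ?_, by simp⟩
    · intro x hx y hy hxy
      apply Finset.card_lt_card
      refine Finset.ssubset_iff_of_subset ?_ |>.2 ⟨x, ?_, ?_⟩
      · intro z hz
        simp only [Finset.mem_filter] at hz ⊢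
        exact ⟨hz.1, hz.2.trans hxy⟩
      · simp only [Finset.mem_filter]; exact ⟨by exact_mod_cast hx, hxy⟩
      · simp
    · intro x hx
      have h1 : (I.filter (· < x)).card < I.card := by
        apply Finset.card_lt_card
        refine Finset.ssubset_iff_of_subset (Finset.filter_subset _ _) |>.2 ⟨x, hx, by simp⟩
      have h2 : I.card ≤ e := by
        have : I \ edgeSupport ∅ = I := by ext; simp [edgeSupport]
        rw [this] at hI
        simp at hp; omega
      have h3 : e ≤ k ^ (2 * e - 2) := by
        obtain ⟨n, rfl⟩ : ∃ n, e = n + 1 := ⟨e - 1, by simp at hFe; omega⟩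
        have : n < k ^ n := Nat.lt_pow_self (by omega)
        have : k ^ n ≤ k ^ (2 * (n + 1) - 2) := Nat.pow_le_pow_right (by omega) (by omega)
        omega
      show (I.filter (· < x)).card < _
      omega
  · obtain ⟨f, hf, hlt, hE⟩ := ih hne
    have hc := hne.card_pos
    have hb := pow_bound k (e - F.card) hk (by omega)
    obtain ⟨g, h1, h2, h3⟩ := insert_markers k (2 * F.card - 1) (2 * (e - F.card) - 1) p
      (by omega) F I hI f hf hlt hE
    have he : 2 * F.card - 1 + (2 * (e - F.card) - 1) = 2 * e - 2 := by omega
    rw [he] at h2 h3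
    exact ⟨g, h1, h2, h3⟩

lemma nestable_embed (k : ℕ) (hk : 3 ≤ k) (E : Finset (Finset ℕ)) (h : KNestable k E)
    (hu : ∀ A ∈ E, A.card = k) (hne : E.Nonempty) :
    ∃ f : ℕ → ℕ, StrictMonoOn f (edgeSupport E : Set ℕ) ∧
      (∀ x ∈ edgeSupport E, f x < k ^ (2 * E.card - 1)) ∧
      ∀ A ∈ E, TreeEdge k (2 * E.card - 1) (A.image f) := by
  induction h with
  | empty => simp at hne
  | nest E hk0 I hord hspan hint hfirst hlast hedges hrec ih =>
    have hI : ∀ x j j', x ∈ I j → x ∈ I j' → j = j' := by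
      intro x j j' hj hj'
      rcases lt_trichotomy j j' with h | h | h
      · exact absurd (hord _ _ h x hj x hj') (lt_irrefl _)
      · exact h
      · exact absurd (hord _ _ h x hj' x hj) (lt_irrefl _)
    have hIS : ∀ j, ∀ x ∈ I j, x ∈ edgeSupport E := by
      intro j x hx
      rw [hspan]; simp only [Finset.mem_biUnion, Finset.mem_univ, true_and]; exact ⟨j, hx⟩
    have hSI : ∀ x ∈ edgeSupport E, ∃ j, x ∈ I j := by
      intro x hx
      rw [hspan] at hx; simpa using hx
    obtain ⟨A₀, hA₀⟩ := hne
    have hepos : 0 < E.card := Finset.card_pos.2 ⟨A₀, hA₀⟩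
    obtain ⟨x₀, hx₀⟩ : A₀.Nonempty := Finset.card_pos.1 (by rw [hu A₀ hA₀]; omega)
    have hx₀S : x₀ ∈ edgeSupport E := mem_edgeSupport.2 ⟨A₀, hA₀, hx₀⟩
    obtain ⟨y, hy, -⟩ := hfirst x₀ hx₀S
    obtain ⟨z, hz, -⟩ := hlast x₀ hx₀S
    set T := E.filter fun A => ¬ ∃ j, A ⊆ I j with hT
    have hcard1 : ∀ j, (E.filter fun A => A ⊆ I j).card < E.card := by
      intro j
      apply Finset.card_lt_card
      refine Finset.ssubset_iff_of_subset (Finset.filter_subset _ _) |>.2 ?_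
      by_contra hcon
      push Not at hcon
      have hall : ∀ w ∈ edgeSupport E, w ∈ I j := by
        intro w hw
        obtain ⟨A, hA, hwA⟩ := mem_edgeSupport.1 hw
        exact (Finset.mem_filter.1 (hcon A hA)).2 hwA
      have e1 := hI y _ _ hy (hall y (hIS _ _ hy))
      have e2 := hI z _ _ hz (hall z (hIS _ _ hz))
      rw [← e2] at e1
      simp only [Fin.mk.injEq] at e1
      omega
    have hcard2 : ∀ j, (E.filter fun A => A ⊆ I j).card + T.card ≤ E.card := by
      intro j
      rw [← Finset.card_union_of_disjoint]
      · apply Finset.card_le_card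
        apply Finset.union_subset <;> exact Finset.filter_subset _ _
      · rw [Finset.disjoint_filter]
        intro A _ h1 h2
        exact h2 ⟨j, h1⟩
    have hmark : ∀ j, (I j \ edgeSupport (E.filter fun A => A ⊆ I j)).card ≤ T.card := by
      intro j
      have hsub : I j \ edgeSupport (E.filter fun A => A ⊆ I j) ⊆
          T.biUnion fun A => A ∩ I j := by
        intro w hw
        rw [Finset.mem_sdiff] at hw
        obtain ⟨A, hA, hwA⟩ := mem_edgeSupport.1 (hIS j w hw.1)
        rw [Finset.mem_biUnion]
        refine ⟨A, ?_, Finset.mem_inter.2 ⟨hwA, hw.1⟩⟩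
        rw [hT, Finset.mem_filter]
        refine ⟨hA, ?_⟩
        rintro ⟨j', hj'⟩
        have := hI w j j' hw.1 (hj' hwA)
        subst this
        exact hw.2 (mem_edgeSupport.2 ⟨A, Finset.mem_filter.2 ⟨hA, hj'⟩, hwA⟩)
      refine (Finset.card_le_card hsub).trans ?_
      refine (Finset.card_biUnion_le_card_mul _ _ 1 ?_).trans (by simp)
      intro A hA
      rw [hT, Finset.mem_filter] at hA
      rcases hedges A hA.1 with h | h
      · exact absurd h hA.2
      · exact (h j).le
    have hg : ∀ j, ∃ g : ℕ → ℕ, StrictMonoOn g (I j : Set ℕ) ∧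
        (∀ x ∈ I j, g x < k ^ (2 * E.card - 2)) ∧
        ∀ A ∈ E.filter (fun A => A ⊆ I j), TreeEdge k (2 * E.card - 2) (A.image g) := by
      intro j
      refine interval_embed k E.card T.card hk _ (I j) (hcard1 j) (hcard2 j) (hmark j) ?_
      intro hne'
      exact ih j (fun A hA => hu A (Finset.mem_filter.1 hA).1) hne'
    choose g hg1 hg2 hg3 using hg
    have : Nonempty (Fin k) := ⟨⟨0, hk0⟩⟩
    choose! J hJ using hSI
    set K := k ^ (2 * E.card - 2) with hK
    have hKpos : 0 < K := Nat.pow_pos (by omega)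
    have hKk : k ^ (2 * E.card - 1) = k * K := by
      rw [hK, ← pow_succ']; congr 1; omega
    have hval : ∀ j, ∀ x ∈ I j, J x = j := fun j x hx => hI x _ _ (hJ x (hIS j x hx)) hx
    refine ⟨fun x => (J x : ℕ) * K + g (J x) x, ?_, ?_, ?_⟩
    · intro a ha b hb hab
      have ha' := hJ a (by exact_mod_cast ha)
      have hb' := hJ b (by exact_mod_cast hb)
      show (J a : ℕ) * K + g (J a) a < (J b : ℕ) * K + g (J b) b
      rcases lt_trichotomy (J a) (J b) with h | h | h
      · have h1 := hg2 _ _ ha'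
        have h2 : ((J a : ℕ) + 1) * K ≤ (J b : ℕ) * K :=
          Nat.mul_le_mul_right K (by exact_mod_cast h)
        rw [add_mul, one_mul] at h2
        omega
      · rw [h] at ha' ⊢
        have := hg1 (J b) (by exact_mod_cast ha') (by exact_mod_cast hb') hab
        omega
      · exact absurd (hord _ _ h b hb' a ha') (by omega)
    · intro x hx
      have h1 := hg2 _ _ (hJ x hx)
      have h2 : ((J x : ℕ) + 1) * K ≤ k * K := Nat.mul_le_mul_right K (J x).2
      rw [add_mul, one_mul] at h2
      show (J x : ℕ) * K + g (J x) x < _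
      rw [hKk]
      omega
    · intro A hA
      rcases hedges A hA with ⟨j, hj⟩ | hA1
      · obtain ⟨l, hl, q, hq⟩ := hg3 j A (Finset.mem_filter.2 ⟨hA, hj⟩)
        refine ⟨l, by omega, (j : ℕ) * k ^ (2 * E.card - 2 - l - 1) + q, ?_⟩
        have hKl : K = k ^ l * (k ^ (2 * E.card - 2 - l - 1) * k) := by
          rw [hK, ← pow_succ, ← pow_add]; congr 1; omega
        have : A.image (fun x => (J x : ℕ) * K + g (J x) x) =
            A.image (fun x => (j : ℕ) * K + g j x) := by
          apply Finset.image_congr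
          intro x hx
          have := hval j x (hj (by exact_mod_cast hx))
          simp only [this]
        rw [this]
        have h2 : (A.image (fun x => (j : ℕ) * K + g j x)).image (fun x => x / k ^ l) =
            ((A.image (g j)).image (fun x => x / k ^ l)).image
              (fun x => (j : ℕ) * (k ^ (2 * E.card - 2 - l - 1) * k) + x) := by
          simp only [Finset.image_image]
          apply Finset.image_congr
          intro x hx
          simp only [Function.comp]
          rw [hKl]
          have : (j : ℕ) * (k ^ l * (k ^ (2 * E.card - 2 - l - 1) * k)) + g j x =
            g j x + k ^ l * ((j : ℕ) * (k ^ (2 * E.card - 2 - l - 1) * k)) := by ring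
          rw [this, Nat.add_mul_div_left _ _ (Nat.pow_pos (by omega))]
          ring
        rw [h2, hq, Finset.image_add_left_Ico]
        congr 1 <;> ring
      · refine ⟨2 * E.card - 2, by omega, 0, ?_⟩
        have hdiv : ∀ x ∈ edgeSupport E, ((J x : ℕ) * K + g (J x) x) / K = J x := by
          intro x hx
          have h1 := hg2 _ _ (hJ x hx)
          rw [mul_comm, add_comm, Nat.add_mul_div_left _ _ hKpos, Nat.div_eq_of_lt h1, zero_add]
        ext v
        simp only [Finset.mem_image, Finset.mem_Ico, zero_mul, zero_add, Nat.zero_le, true_and]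
        constructor
        · rintro ⟨_, ⟨x, hx, rfl⟩, rfl⟩
          rw [← hK, hdiv x (mem_edgeSupport.2 ⟨A, hA, hx⟩)]
          exact (J x).2
        · intro hv
          obtain ⟨x, hx⟩ := Finset.card_pos.1 (by rw [hA1 ⟨v, hv⟩]; omega)
          rw [Finset.mem_inter] at hx
          refine ⟨_, ⟨x, hx.1, rfl⟩, ?_⟩
          rw [← hK, hdiv x (mem_edgeSupport.2 ⟨A, hA, hx.1⟩), hval _ x hx.2]

/-- Every `t`-coloring of the `k`-sets of `{0,…,N-1}` has a monochromatic copy of `E`. -/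
def Arrows (E : Finset (Finset ℕ)) (t N : ℕ) : Prop :=
  ∀ c : Finset ℕ → Fin t, ∃ i, ∃ f : ℕ → ℕ, StrictMonoOn f (edgeSupport E : Set ℕ) ∧
    (∀ x ∈ edgeSupport E, f x < N) ∧ ∀ A ∈ E, c (A.image f) = i

lemma block_step (k : ℕ) (hk : 0 < k) (E : Finset (Finset ℕ)) (hu : ∀ A ∈ E, A.card = k)
    (hdisj : ∀ A ∈ E, ∀ B ∈ E, A ≠ B → Disjoint A B) (t N₁ : ℕ)
    (hN₁ : Arrows E (t + 1) N₁) (s : ℕ) (c : Finset ℕ → Fin (t + 2)) :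
    (∃ i, ∃ f : ℕ → ℕ, StrictMonoOn f (edgeSupport E : Set ℕ) ∧
      (∀ x ∈ edgeSupport E, f x < N₁ ^ s) ∧ ∀ A ∈ E, c (A.image f) = i) ∨
    ∃ g : ℕ → ℕ, StrictMonoOn g (Finset.range (k ^ s) : Set ℕ) ∧
      (∀ x < k ^ s, g x < N₁ ^ s) ∧
      ∀ A ⊆ Finset.range (k ^ s), A.card = k → TreeEdge k s A →
        c (A.image g) = Fin.last (t + 1) := by
  classical
  induction s generalizing c with
  | zero =>
    right
    refine ⟨id, strictMono_id.strictMonoOn _, by simp, ?_⟩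
    rintro A _ _ ⟨l, hl, _⟩
    omega
  | succ s ih =>
    set N := N₁ ^ s with hN
    by_cases hred : ∃ b < N₁, ∃ i, ∃ f : ℕ → ℕ, StrictMonoOn f (edgeSupport E : Set ℕ) ∧
      (∀ x ∈ edgeSupport E, f x < N) ∧ ∀ A ∈ E, c ((A.image f).image (· + b * N)) = i
    · obtain ⟨b, hb, i, f, h1, h2, h3⟩ := hred
      left
      refine ⟨i, fun x => f x + b * N, ?_, ?_, ?_⟩
      · intro x hx y hy hxy
        have := h1 hx hy hxy
        show f x + b * N < f y + b * N
        omega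
      · intro x hx
        have := h2 x hx
        have h4 : (b + 1) * N ≤ N₁ * N := Nat.mul_le_mul_right N hb
        rw [add_mul, one_mul] at h4
        rw [pow_succ', ← hN]
        show f x + b * N < _
        omega
      · intro A hA
        have := h3 A hA
        rw [Finset.image_image] at this
        exact this
    have hg : ∀ b, ∃ g : ℕ → ℕ, b < N₁ → StrictMonoOn g (Finset.range (k ^ s) : Set ℕ) ∧
      (∀ x < k ^ s, g x < N) ∧
      ∀ A ⊆ Finset.range (k ^ s), A.card = k → TreeEdge k s A →
        c ((A.image g).image (· + b * N)) = Fin.last (t + 1) := by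
      intro b
      by_cases hb : b < N₁
      · rcases ih (fun A => c (A.image (· + b * N))) with h | ⟨g, h⟩
        · exact absurd ⟨b, hb, h⟩ hred
        · exact ⟨g, fun _ => h⟩
      · exact ⟨id, fun h => absurd h hb⟩
    choose g hg using hg
    -- transversal edges over a set `B` of blocks
    let Tr : Finset ℕ → Finset ℕ → Prop := fun B X => X.card = k ∧ X.image (· / N) = B ∧
      ∀ x ∈ X, ∃ y < k ^ s, x = g (x / N) y + (x / N) * N
    by_cases hblue : ∃ B ⊆ Finset.range N₁, B.card = k ∧
      ∀ X, Tr B X → c X = Fin.last (t + 1)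
    · obtain ⟨B, hBs, hBk, hB⟩ := hblue
      right
      let b : ℕ → ℕ := fun j => if h : j < k then B.orderEmbOfFin hBk ⟨j, h⟩ else 0
      have hbB : ∀ j < k, b j ∈ B := by
        intro j hj
        simp only [b, dif_pos hj]
        exact Finset.orderEmbOfFin_mem B hBk _
      have hbN : ∀ j < k, b j < N₁ := fun j hj => Finset.mem_range.1 (hBs (hbB j hj))
      have hbm : ∀ i j, i < j → j < k → b i < b j := by
        intro i j hij hj
        simp only [b, dif_pos hj, dif_pos (hij.trans hj)]
        exact (B.orderEmbOfFin hBk).strictMono (by simpa using hij)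
      have hbimg : (Finset.range k).image b = B := by
        apply Finset.eq_of_subset_of_card_le
        · intro y hy
          obtain ⟨j, hj, rfl⟩ := Finset.mem_image.1 hy
          exact hbB j (Finset.mem_range.1 hj)
        · rw [Finset.card_image_of_injOn, hBk, Finset.card_range]
          intro i hi j hj hij
          simp only [Finset.coe_range, Set.mem_Iio] at hi hj
          rcases lt_trichotomy i j with h | h | h
          · have := hbm i j h hj; omega
          · exact h
          · have := hbm j i h hi; omega
      set K := k ^ s with hK
      have hKpos : 0 < K := Nat.pow_pos hk
      have hKk : k ^ (s + 1) = k * K := by rw [pow_succ', hK]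
      let G : ℕ → ℕ := fun x => g (b (x / K)) (x % K) + b (x / K) * N
      have hlt : ∀ x < k ^ (s + 1), x / K < k := by
        intro x hx
        rw [hKk] at hx
        exact Nat.div_lt_of_lt_mul (by rwa [mul_comm] at hx)
      have hgN : ∀ x < k ^ (s + 1), g (b (x / K)) (x % K) < N := fun x hx =>
        (hg _ (hbN _ (hlt x hx))).2.1 _ (Nat.mod_lt _ hKpos)
      have hGdiv : ∀ x < k ^ (s + 1), G x / N = b (x / K) := by
        intro x hx
        have := hgN x hx
        simp only [G]
        rw [mul_comm, Nat.add_mul_div_left _ _ (by omega), Nat.div_eq_of_lt this, zero_add]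
      have hGm : StrictMonoOn G (Finset.range (k ^ (s + 1)) : Set ℕ) := by
        intro x hx y hy hxy
        simp only [Finset.coe_range, Set.mem_Iio] at hx hy
        have h1 : x / K ≤ y / K := Nat.div_le_div_right hxy.le
        rcases h1.lt_or_eq with h | h
        · have h2 := hbm _ _ h (hlt y hy)
          rw [← hGdiv x hx, ← hGdiv y hy] at h2
          exact lt_of_not_ge fun h => absurd (Nat.div_le_div_right (c := N) h) (by omega)
        · have h2 : x % K < y % K := by
            have e1 := Nat.div_add_mod x K
            have e2 := Nat.div_add_mod y K
            rw [h] at e1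
            omega
          have h3 := (hg _ (hbN _ (hlt y hy))).1
            (by simpa using Nat.mod_lt x hKpos) (by simpa using Nat.mod_lt y hKpos) h2
          simp only [G, h]
          omega
      refine ⟨G, hGm, ?_, ?_⟩
      · intro x hx
        have h1 := hgN x hx
        have h4 : (b (x / K) + 1) * N ≤ N₁ * N := Nat.mul_le_mul_right N (hbN _ (hlt x hx))
        rw [add_mul, one_mul] at h4
        rw [pow_succ', ← hN]
        simp only [G]
        omega
      · rintro A hAr hAk ⟨l, hl, q, hq⟩
        have hAlt : ∀ x ∈ A, x < k ^ (s + 1) := fun x hx => Finset.mem_range.1 (hAr hx)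
        rcases Nat.lt_succ_iff_lt_or_eq.1 hl with hl | rfl
        · have hkl : 0 < k ^ l := Nat.pow_pos hk
          set R := k ^ (s - l - 1) with hR
          have hRpos : 0 < R := Nat.pow_pos hk
          have hKl : K = k ^ l * k * R := by
            rw [hK, hR, ← pow_succ, ← pow_add]; congr 1; omega
          have hj : ∀ x ∈ A, x / K = q / R := by
            intro x hx
            have : x / k ^ l ∈ Finset.Ico (q * k) (q * k + k) := by
              rw [← hq]; exact Finset.mem_image_of_mem (fun x => x / k ^ l) hx
            rw [Finset.mem_Ico] at this
            rw [hKl, ← Nat.div_div_eq_div_mul, ← Nat.div_div_eq_div_mul]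
            congr 1
            rw [Nat.div_eq_iff hk]
            omega
          set j := q / R with hjdef
          obtain ⟨a, ha⟩ := Finset.card_pos.1 (by rw [hAk]; exact hk)
          have hjk : j < k := by rw [← hj a ha]; exact hlt a (hAlt a ha)
          have hdecomp : ∀ x ∈ A, K * j + x % K = x := by
            intro x hx
            rw [← hj x hx]; exact Nat.div_add_mod x K
          have key := (hg _ (hbN j hjk)).2.2 (A.image (· % K)) (by
            intro y hy
            obtain ⟨x, hx, rfl⟩ := Finset.mem_image.1 hy
            exact Finset.mem_range.2 (Nat.mod_lt _ hKpos)) (by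
            rw [Finset.card_image_of_injOn, hAk]
            intro x hx y hy hxy
            simp only at hxy
            rw [← hdecomp x hx, ← hdecomp y hy, hxy]) (by
            refine ⟨l, hl, q % R, ?_⟩
            apply Finset.image_injective (add_right_injective (j * (k * R)))
            have e1 : ((A.image (· % K)).image (fun x => x / k ^ l)).image
                (j * (k * R) + ·) = A.image (fun x => x / k ^ l) := by
              simp only [Finset.image_image]
              apply Finset.image_congr
              intro x hx
              simp only [Function.comp]
              conv_rhs => rw [← hdecomp x hx]
              have : K * j + x % K = x % K + k ^ l * (j * (k * R)) := by
                nth_rewrite 1 [hKl]; ring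
              rw [this, Nat.add_mul_div_left _ _ hkl, add_comm]
            have e3 : q = R * j + q % R := (Nat.div_add_mod q R).symm
            have e2 : (Finset.Ico (q % R * k) (q % R * k + k)).image (j * (k * R) + ·) =
                Finset.Ico (q * k) (q * k + k) := by
              rw [Finset.image_add_left_Ico]
              have : j * (k * R) + q % R * k = q * k := by
                conv_rhs => rw [e3]
                ring
              rw [← add_assoc, this]
            exact e1.trans (hq.trans e2.symm))
          rw [← key]
          congr 1
          simp only [Finset.image_image]
          apply Finset.image_congr
          intro x hx
          simp only [G, Function.comp, hj x hx]
        · have hq0 : q = 0 := by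
            have : q * k ∈ A.image (fun x => x / K) := by
              rw [hq, Finset.mem_Ico]; omega
            obtain ⟨x, hx, hxq⟩ := Finset.mem_image.1 this
            have h1 := hlt x (hAlt x hx)
            rw [hxq] at h1
            by_contra hne
            have := Nat.mul_le_mul_right k (Nat.one_le_iff_ne_zero.2 hne)
            omega
          subst hq0
          apply hB
          refine ⟨?_, ?_, ?_⟩
          · rw [Finset.card_image_of_injOn (hGm.injOn.mono (by exact_mod_cast hAr)), hAk]
          · rw [← hbimg, Finset.image_image]
            have e1 : Finset.range k = A.image (fun x => x / K) := by
              rw [hq]; ext; simp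
            rw [e1, Finset.image_image]
            apply Finset.image_congr
            intro x hx
            exact hGdiv x (hAlt x hx)
          · intro x hx
            obtain ⟨a, ha, rfl⟩ := Finset.mem_image.1 hx
            rw [hGdiv a (hAlt a ha)]
            exact ⟨a % K, Nat.mod_lt _ hKpos, rfl⟩
    · push Not at hblue
      left
      have hX : ∀ B, ∃ X, B ⊆ Finset.range N₁ → B.card = k → Tr B X ∧ c X ≠ Fin.last (t + 1) := by
        intro B
        by_cases h : B ⊆ Finset.range N₁ ∧ B.card = k
        · obtain ⟨X, h1, h2⟩ := hblue B h.1 h.2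
          exact ⟨X, fun _ _ => ⟨h1, h2⟩⟩
        · exact ⟨∅, fun h1 h2 => absurd ⟨h1, h2⟩ h⟩
      choose X hX using hX
      obtain ⟨i, f, hf, hfN, hfc⟩ := hN₁ fun B =>
        if h : c (X B) ≠ Fin.last (t + 1) then (c (X B)).castPred h else 0
      have hfX : ∀ A ∈ E, Tr (A.image f) (X (A.image f)) ∧ c (X (A.image f)) = i.castSucc := by
        intro A hA
        have hAS : ∀ x ∈ A, x ∈ edgeSupport E := fun x hx => mem_edgeSupport.2 ⟨A, hA, hx⟩
        obtain ⟨h1, h2⟩ := hX (A.image f) (by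
          intro y hy
          obtain ⟨x, hx, rfl⟩ := Finset.mem_image.1 hy
          exact Finset.mem_range.2 (hfN x (hAS x hx))) (by
          rw [Finset.card_image_of_injOn (hf.injOn.mono hAS), hu A hA])
        refine ⟨h1, ?_⟩
        have := hfc A hA
        rw [dif_pos h2] at this
        rw [← this, Fin.castSucc_castPred]
      have hF : ∀ x ∈ edgeSupport E, ∃ y, y / N = f x ∧ ∀ A ∈ E, x ∈ A → y ∈ X (A.image f) := by
        intro x hx
        obtain ⟨A, hA, hxA⟩ := mem_edgeSupport.1 hx
        obtain ⟨⟨h1, h2, h3⟩, h4⟩ := hfX A hA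
        have : f x ∈ (X (A.image f)).image (· / N) := by
          rw [h2]; exact Finset.mem_image_of_mem f hxA
        obtain ⟨y, hy, hyx⟩ := Finset.mem_image.1 this
        refine ⟨y, hyx, ?_⟩
        intro A' hA' hxA'
        have : A' = A := by
          by_contra hcon
          exact Finset.disjoint_left.1 (hdisj A' hA' A hA hcon) hxA' hxA
        rw [this]; exact hy
      choose! F hF1 hF2 using hF
      have hFm : StrictMonoOn F (edgeSupport E : Set ℕ) := by
        intro x hx y hy hxy
        have := hf hx hy hxy
        rw [← hF1 x (by exact_mod_cast hx), ← hF1 y (by exact_mod_cast hy)] at this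
        exact lt_of_not_ge fun h => absurd (Nat.div_le_div_right (c := N) h) (by omega)
      refine ⟨i.castSucc, F, hFm, ?_, ?_⟩
      · intro x hx
        have h1 := hF1 x hx
        have h2 := hfN x hx
        obtain ⟨A, hA, hxA⟩ := mem_edgeSupport.1 hx
        obtain ⟨⟨-, -, h3⟩, -⟩ := hfX A hA
        obtain ⟨y, hy, hxy⟩ := h3 (F x) (hF2 x hx A hA hxA)
        rw [h1] at hxy
        have h5 := (hg (f x) h2).2.1 y hy
        have h4 : (f x + 1) * N ≤ N₁ * N := Nat.mul_le_mul_right N h2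
        rw [add_mul, one_mul] at h4
        rw [pow_succ', ← hN]
        omega
      · intro A hA
        have hAS : ∀ x ∈ A, x ∈ edgeSupport E := fun x hx => mem_edgeSupport.2 ⟨A, hA, hx⟩
        obtain ⟨⟨h1, -, -⟩, h4⟩ := hfX A hA
        rw [← h4]
        congr 1
        apply Finset.eq_of_subset_of_card_le
        · intro y hy
          obtain ⟨x, hx, rfl⟩ := Finset.mem_image.1 hy
          exact hF2 x (hAS x hx) A hA hx
        · rw [h1, Finset.card_image_of_injOn (hFm.injOn.mono hAS), hu A hA]

lemma arrows_step (k : ℕ) (hk : 0 < k) (E : Finset (Finset ℕ)) (hu : ∀ A ∈ E, A.card = k)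
    (hdisj : ∀ A ∈ E, ∀ B ∈ E, A ≠ B → Disjoint A B) (t N₁ s : ℕ)
    (hemb : ∃ f : ℕ → ℕ, StrictMonoOn f (edgeSupport E : Set ℕ) ∧
      (∀ x ∈ edgeSupport E, f x < k ^ s) ∧ ∀ A ∈ E, TreeEdge k s (A.image f))
    (hN₁ : Arrows E (t + 1) N₁) : Arrows E (t + 2) (N₁ ^ s) := by
  intro c
  rcases block_step k hk E hu hdisj t N₁ hN₁ s c with h | ⟨g, hg1, hg2, hg3⟩
  · exact h
  · obtain ⟨f, hf1, hf2, hf3⟩ := hemb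
    refine ⟨Fin.last (t + 1), g ∘ f, ?_, fun x hx => hg2 _ (hf2 x hx), ?_⟩
    · intro x hx y hy hxy
      exact hg1 (by simpa using hf2 x (by exact_mod_cast hx))
        (by simpa using hf2 y (by exact_mod_cast hy)) (hf1 hx hy hxy)
    · intro A hA
      have hAS : ∀ x ∈ A, x ∈ edgeSupport E := fun x hx => mem_edgeSupport.2 ⟨A, hA, hx⟩
      rw [← Finset.image_image]
      refine hg3 _ ?_ ?_ (hf3 A hA)
      · intro y hy
        obtain ⟨x, hx, rfl⟩ := Finset.mem_image.1 hy
        exact Finset.mem_range.2 (hf2 x (hAS x hx))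
      · rw [Finset.card_image_of_injOn (hf1.injOn.mono hAS), hu A hA]

/-- For `k ≥ 3`, `e ≥ 2`, `t ≥ 1`, and a `k`-nestable ordered
`k`-uniform matching `M` with `e` edges (on vertex set `{1, …, ke}`, which its edges
partition), `OR_t(M) ≤ (ek)^{(2e-1)^{t-1}}`. -/
theorem ordered_ramsey_nestable_matching (k e t : ℕ) (hk : 3 ≤ k) (he : 2 ≤ e)
    (ht : 1 ≤ t) (M : OrderedHypergraph) (hn : M.n = k * e) (hecard : M.edges.card = e)
    (huniform : ∀ A ∈ M.edges, A.card = k)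
    (hdisj : ∀ A ∈ M.edges, ∀ B ∈ M.edges, A ≠ B → Disjoint A B)
    (hsupp : edgeSupport M.edges = Finset.Icc 1 (k * e))
    (hnest : KNestable k M.edges) :
    ORnum k (fun _ : Fin t => M) ≤ (e * k) ^ ((2 * e - 1) ^ (t - 1)) := by
  have hne : M.edges.Nonempty := Finset.card_pos.1 (by omega)
  have hemb := nestable_embed k hk M.edges hnest huniform hne
  rw [hecard] at hemb
  have harr : ∀ t, Arrows M.edges (t + 1) ((e * k) ^ ((2 * e - 1) ^ t)) := by
    intro t
    induction t with
    | zero =>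
      intro c
      refine ⟨0, fun x => x - 1, ?_, ?_, fun A _ => Fin.ext (by omega)⟩
      · intro x hx y hy hxy
        rw [hsupp] at hx hy
        simp at hx hy
        show x - 1 < y - 1
        omega
      · intro x hx
        rw [hsupp, Finset.mem_Icc, mul_comm] at hx
        simp only [pow_zero, pow_one]
        omega
    | succ t ih =>
      rw [pow_succ, pow_mul]
      exact arrows_step k (by omega) M.edges huniform hdisj t _ _ hemb ih
  obtain ⟨t, rfl⟩ : ∃ t', t = t' + 1 := ⟨t - 1, by omega⟩
  apply Nat.sInf_le
  intro c
  rw [Nat.add_sub_cancel]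
  set N := (e * k) ^ ((2 * e - 1) ^ t) with hN
  obtain ⟨i, f, hf, hfN, hfc⟩ := harr t fun A => c (A.image (· + 1))
  have hke : 1 ≤ k * e := Nat.mul_pos (by omega) (by omega)
  have hV : ∀ x, x ∈ edgeSupport M.edges ↔ 1 ≤ x ∧ x ≤ k * e := by
    intro x; rw [hsupp, Finset.mem_Icc]
  let F : ℕ → ℕ := fun x =>
    if x = 0 then 0 else if x ≤ k * e then f x + 1 else f (k * e) + 1 + x
  have hF : ∀ x ∈ edgeSupport M.edges, F x = f x + 1 := by
    intro x hx
    rw [hV] at hx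
    simp only [F]
    rw [if_neg (by omega), if_pos hx.2]
  have hFmono : StrictMono F := by
    intro x y hxy
    have hle : ∀ x, 1 ≤ x → x ≤ k * e → f x ≤ f (k * e) := by
      intro x h1 h2
      exact hf.monotoneOn (by exact_mod_cast (hV x).2 ⟨h1, h2⟩)
        (by exact_mod_cast (hV _).2 ⟨hke, le_rfl⟩) h2
    have hlt : ∀ x y, 1 ≤ x → x < y → y ≤ k * e → f x < f y := by
      intro x y h1 h2 h3
      exact hf (by exact_mod_cast (hV x).2 ⟨h1, by omega⟩)
        (by exact_mod_cast (hV _).2 ⟨by omega, h3⟩) h2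
    have a := hle x
    have b := hlt x y
    simp only [F]
    split_ifs <;> omega
  refine ⟨i, F, hFmono, ?_, ?_⟩
  · intro v hv
    rw [hn, ← hsupp] at hv
    rw [hF v hv]
    have := hfN v hv
    simp only [coloredSubgraph, Finset.mem_Icc]
    omega
  · intro A hA
    have hAS : ∀ x ∈ A, x ∈ edgeSupport M.edges := fun x hx => mem_edgeSupport.2 ⟨A, hA, hx⟩
    simp only [coloredSubgraph, Finset.mem_filter, Finset.mem_powersetCard]
    refine ⟨⟨?_, ?_⟩, ?_⟩
    · intro y hy
      obtain ⟨x, hx, rfl⟩ := Finset.mem_image.1 hy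
      rw [hF x (hAS x hx), Finset.mem_Icc]
      have := hfN x (hAS x hx)
      omega
    · rw [Finset.card_image_of_injective _ hFmono.injective, huniform A hA]
    · rw [← hfc A hA, Finset.image_image]
      congr 1
      apply Finset.image_congr
      intro x hx
      exact hF x (hAS x (by exact_mod_cast hx))
end

section
/- For every integer k ≥ 4, the ordered k-uniform matching on vertex set {1,...,2k} with the two edges A = {1,...,⌊k/2⌋} ∪ {k+1,...,k+⌈k/2⌉} and B = {1,...,2k} \ A is not k-nestable. -/
/-- For `k ≥ 4`, the ordered `k`-uniform matching on `{1, …, 2k}`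
with the two edges `A = {1, …, ⌊k/2⌋} ∪ {k+1, …, k+⌈k/2⌉}` and `B = {1, …, 2k} \ A` is
not `k`-nestable. -/
theorem interleaved_matching_not_nestable (k : ℕ) (hk : 4 ≤ k) :
    ¬ KNestable k
        ({Finset.Icc 1 (k / 2) ∪ Finset.Icc (k + 1) (k + (k + 1) / 2),
          Finset.Icc 1 (2 * k) \
            (Finset.Icc 1 (k / 2) ∪ Finset.Icc (k + 1) (k + (k + 1) / 2))} :
          Finset (Finset ℕ)) := by
  intro h
  generalize hA : Finset.Icc 1 (k / 2) ∪ Finset.Icc (k + 1) (k + (k + 1) / 2) = A at h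
  generalize hB : Finset.Icc 1 (2 * k) \ A = B at h
  have mA : ∀ x, x ∈ A ↔ (1 ≤ x ∧ x ≤ k / 2) ∨ (k + 1 ≤ x ∧ x ≤ k + (k + 1) / 2) := by
    intro x; rw [← hA]; simp
  have mB : ∀ x, x ∈ B ↔ (1 ≤ x ∧ x ≤ 2 * k) ∧
      ¬ ((1 ≤ x ∧ x ≤ k / 2) ∨ (k + 1 ≤ x ∧ x ≤ k + (k + 1) / 2)) := by
    intro x; rw [← hB, Finset.mem_sdiff, mA, Finset.mem_Icc]
  have mS : ∀ x, x ∈ edgeSupport {A, B} ↔ 1 ≤ x ∧ x ≤ 2 * k := by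
    intro x
    have : x ∈ edgeSupport {A, B} ↔ x ∈ A ∨ x ∈ B := by
      simp [edgeSupport]
    rw [this, mA, mB]
    omega
  generalize hE : ({A, B} : Finset (Finset ℕ)) = E at h mS
  cases h with
  | empty =>
    have := Finset.insert_ne_empty A {B}
    exact this hE
  | nest _ hk0 I hord hspan hint hfirst hlast hedges hrec =>
    have hsub : ∀ j, ∀ x ∈ I j, 1 ≤ x ∧ x ≤ 2 * k := by
      intro j x hx
      rw [← mS, hspan]
      exact Finset.mem_biUnion.2 ⟨j, Finset.mem_univ _, hx⟩
    have hdisj : ∀ j j', ∀ x, x ∈ I j → x ∈ I j' → j = j' := by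
      intro j j' x hx hx'
      rcases lt_trichotomy j j' with h | h | h
      · exact absurd (hord _ _ h x hx x hx') (lt_irrefl _)
      · exact h
      · exact absurd (hord _ _ h x hx' x hx) (lt_irrefl _)
    have hconv : ∀ j x y z, x ∈ I j → y ∈ I j → x ≤ z → z ≤ y → z ∈ I j := by
      intro j x y z hx hy h1 h2
      have := hsub j x hx
      have := hsub j y hy
      exact hint j x hx y hy z ((mS z).2 (by omega)) h1 h2
    have huniq : ∀ (C : Finset ℕ) j, (C ∩ I j).card = 1 → ∀ x y, x ∈ C → y ∈ C →
        x ∈ I j → y ∈ I j → x = y := by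
      intro C j hc x y hx hy hx' hy'
      exact Finset.card_le_one.1 hc.le x (Finset.mem_inter.2 ⟨hx, hx'⟩) y
        (Finset.mem_inter.2 ⟨hy, hy'⟩)
    obtain ⟨y, hy, hy1⟩ := hfirst 1 ((mS 1).2 (by omega))
    obtain rfl : y = 1 := by have := hsub _ y hy; omega
    obtain ⟨z, hz, hz1⟩ := hlast (2 * k) ((mS _).2 (by omega))
    obtain rfl : z = 2 * k := by have := hsub _ z hz; omega
    have hne : (⟨0, hk0⟩ : Fin k) ≠ ⟨k - 1, Nat.sub_lt hk0 Nat.one_pos⟩ := by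
      intro h
      have := congrArg Fin.val h
      simp only at this
      omega
    have hAE := hedges A (by rw [← hE]; simp)
    have hBE := hedges B (by rw [← hE]; simp)
    generalize (⟨0, hk0⟩ : Fin k) = a at hy hne
    generalize (⟨k - 1, Nat.sub_lt hk0 Nat.one_pos⟩ : Fin k) = b at hz hne
    rcases hBE with ⟨j, hj⟩ | hBt
    · obtain rfl : j = b := hdisj _ _ _ (hj ((mB _).2 (by omega))) hz
      have h0 : k / 2 + 1 ∈ I j := hj ((mB _).2 (by omega))
      have h1 : k + 1 ∈ I j := hconv _ _ _ _ h0 hz (by omega) (by omega)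
      have h2 : k + 2 ∈ I j := hconv _ _ _ _ h0 hz (by omega) (by omega)
      rcases hAE with ⟨i, hi⟩ | hAt
      · have e1 := hdisj _ _ _ (hi ((mA 1).2 (by omega))) hy
        have e2 := hdisj _ _ _ (hi ((mA (k + 1)).2 (by omega))) h1
        exact hne (e1.symm.trans e2)
      · have := huniq A j (hAt j) (k + 1) (k + 2) ((mA _).2 (by omega))
          ((mA _).2 (by omega)) h1 h2
        omega
    · rcases hAE with ⟨i, hi⟩ | hAt
      · obtain rfl : i = a := hdisj _ _ _ (hi ((mA 1).2 (by omega))) hy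
        have h0 : k + 1 ∈ I i := hi ((mA _).2 (by omega))
        have := huniq B i (hBt i) (k / 2 + 1) (k / 2 + 2) ((mB _).2 (by omega))
          ((mB _).2 (by omega)) (hconv _ _ _ _ hy h0 (by omega) (by omega))
          (hconv _ _ _ _ hy h0 (by omega) (by omega))
        omega
      · obtain ⟨x, hx⟩ := Finset.card_pos.1 (by rw [hBt a]; exact Nat.one_pos)
        obtain ⟨hxB, hxI⟩ := Finset.mem_inter.1 hx
        rw [mB] at hxB
        have := huniq A a (hAt a) 1 2 ((mA _).2 (by omega)) ((mA _).2 (by omega)) hy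
          (hconv _ _ _ _ hy hxI (by omega) (by omega))
        omega
end

section
/- Let k ≥ 2 and s ≥ 0, and let M be an ordered k-uniform matching with e edges on vertex set {1,...,ke} that is contained in G_s^k (i.e., there is an injective, order-preserving map from the vertices of M to the vertices of G_s^k sending edges of M to edges of G_s^k). Then M is k-nestable. -/
/-- Auxiliary: `A` maps under `f` to an edge of the copy of `G_s^k` shifted by `t`. -/
def ShiftedEdge (k : ℕ) (f : ℕ → ℕ) : ℕ → ℕ → Finset ℕ → Prop
  | 0, _, _ => False
  | s + 1, t, A =>
      (∃ j < k, ShiftedEdge k f s (t + j * k ^ s) A) ∨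
        ((∀ x ∈ A, t < f x ∧ f x ≤ t + k ^ (s + 1)) ∧
          ∀ j < k, (A.filter fun x => (f x - t - 1) / k ^ s = j).card = 1)

theorem block_iff (t q y j : ℕ) (hq : 0 < q) (hy : t < y) :
    (y - t - 1) / q = j ↔ t + j * q < y ∧ y ≤ t + (j + 1) * q := by
  rw [Nat.div_eq_iff hq, add_mul]
  generalize j * q = p
  omega

theorem shiftedEdge_of_mem (k : ℕ) (hk : 2 ≤ k) (f : ℕ → ℕ) (hf : StrictMono f) (s : ℕ) :
    ∀ (t : ℕ) (A B : Finset ℕ), B ∈ (iterGraph k s).edges →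
      A.image f = B.image (fun x => x + t) → ShiftedEdge k f s t A := by
  induction s with
  | zero => intro t A B hB; simp [iterGraph] at hB
  | succ s ih =>
    intro t A B hB hAB
    have hq : 0 < k ^ s := by positivity
    simp only [iterGraph, Finset.mem_union, Finset.mem_biUnion, Finset.mem_image,
      Finset.mem_filter, Finset.mem_range, Finset.mem_powersetCard] at hB
    rcases hB with ⟨j, hj, C, hC, rfl⟩ | ⟨⟨hB1, -⟩, hB2⟩
    · left
      refine ⟨j, hj, ih _ A C hC ?_⟩
      rw [hAB, Finset.image_image]
      congr 1
      funext x
      simp only [Function.comp]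
      omega
    · right
      have hA : ∀ x ∈ A, ∃ y ∈ B, y + t = f x := by
        intro x hx
        have : f x ∈ A.image f := Finset.mem_image_of_mem _ hx
        rw [hAB] at this
        simpa using this
      have hA1 : ∀ x ∈ A, t < f x ∧ f x ≤ t + k ^ (s + 1) := by
        intro x hx
        obtain ⟨y, hy, hyx⟩ := hA x hx
        have := Finset.mem_Icc.1 (hB1 hy)
        omega
      refine ⟨hA1, fun j hj => ?_⟩
      refine Eq.trans ?_ (hB2 j hj)
      rw [← Finset.card_image_of_injective _ hf.injective,
        ← Finset.card_image_of_injective (B ∩ _) (add_left_injective t)]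
      congr 1
      ext z
      simp only [Finset.mem_image, Finset.mem_filter, Finset.mem_inter, Finset.mem_Icc]
      constructor
      · rintro ⟨x, ⟨hx, hxj⟩, rfl⟩
        obtain ⟨y, hy, hyx⟩ := hA x hx
        rw [block_iff _ _ _ _ hq (hA1 x hx).1] at hxj
        exact ⟨y, ⟨hy, by omega, by omega⟩, hyx⟩
      · rintro ⟨y, ⟨hy, h1, h2⟩, rfl⟩
        have : y + t ∈ B.image (fun x => x + t) := Finset.mem_image_of_mem _ hy
        rw [← hAB, Finset.mem_image] at this
        obtain ⟨x, hx, hxy⟩ := this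
        refine ⟨x, ⟨hx, ?_⟩, hxy⟩
        rw [block_iff _ _ _ _ hq (hA1 x hx).1]
        omega

theorem ShiftedEdge.bounds (k : ℕ) (hk : 2 ≤ k) (f : ℕ → ℕ) (s : ℕ) :
    ∀ (t : ℕ) (A : Finset ℕ), ShiftedEdge k f s t A →
      A.Nonempty ∧ ∀ x ∈ A, t < f x ∧ f x ≤ t + k ^ s := by
  induction s with
  | zero => intro t A h; exact h.elim
  | succ s ih =>
    intro t A h
    rcases h with ⟨j, hj, h⟩ | ⟨h1, h2⟩
    · obtain ⟨h1, h2⟩ := ih _ _ h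
      refine ⟨h1, fun x hx => ?_⟩
      have := h2 x hx
      have h3 : (j + 1) * k ^ s ≤ k * k ^ s := Nat.mul_le_mul_right _ hj
      rw [add_mul] at h3
      rw [pow_succ']
      omega
    · refine ⟨?_, h1⟩
      have := Finset.card_pos.1 (by rw [h2 0 (by omega)]; exact Nat.one_pos)
      exact this.mono (Finset.filter_subset _ _)

theorem nestable_of_shifted (k : ℕ) (hk : 2 ≤ k) (f : ℕ → ℕ) (hf : StrictMono f) (s : ℕ) :
    ∀ (t : ℕ) (E : Finset (Finset ℕ)), (∀ A ∈ E, ShiftedEdge k f s t A) → KNestable k E := by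
  induction s with
  | zero =>
    intro t E h
    have : E = ∅ := Finset.eq_empty_of_forall_notMem fun A hA => h A hA
    subst this
    exact KNestable.empty
  | succ s ih =>
    intro t E h
    rcases E.eq_empty_or_nonempty with rfl | hE
    · exact KNestable.empty
    have hq : 0 < k ^ s := by positivity
    have hmem : ∀ x, x ∈ edgeSupport E ↔ ∃ A ∈ E, x ∈ A := by
      intro x; simp [edgeSupport, Finset.mem_sup]
    have hb := fun A hA => ShiftedEdge.bounds k hk f (s + 1) t A (h A hA)
    set c : ℕ → ℕ := fun x => (f x - t - 1) / k ^ s with hc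
    have hcmono : Monotone c := by
      intro x y hxy
      have := hf.monotone hxy
      exact Nat.div_le_div_right (by omega)
    have hSne : (edgeSupport E).Nonempty := by
      obtain ⟨A, hA⟩ := hE
      obtain ⟨x, hx⟩ := (hb A hA).1
      exact ⟨x, (hmem x).2 ⟨A, hA, hx⟩⟩
    have hck : ∀ x ∈ edgeSupport E, c x < k := by
      intro x hx
      obtain ⟨A, hA, hxA⟩ := (hmem x).1 hx
      have := (hb A hA).2 x hxA
      rw [pow_succ'] at this
      simp only [hc]
      rw [Nat.div_lt_iff_lt_mul hq]
      omega
    -- edges are in one block or crossing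
    have hdich : ∀ A ∈ E, (∃ j < k, ShiftedEdge k f s (t + j * k ^ s) A ∧ ∀ x ∈ A, c x = j) ∨
        ∀ j < k, (A.filter fun x => c x = j).card = 1 := by
      intro A hA
      rcases h A hA with ⟨j, hj, h1⟩ | ⟨h1, h2⟩
      · left
        refine ⟨j, hj, h1, fun x hx => ?_⟩
        have h3 := (ShiftedEdge.bounds k hk f s _ A h1).2 x hx
        rw [hc]
        refine (block_iff _ _ _ _ hq (by omega)).2 ?_
        rw [add_mul]
        omega
      · exact Or.inr h2
    have hone : ∀ A ∈ E, ∀ j, (∀ x ∈ A, c x = j) → ShiftedEdge k f s (t + j * k ^ s) A := by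
      intro A hA j hAj
      rcases hdich A hA with ⟨i, hi, h1, h2⟩ | h1
      · obtain ⟨x, hx⟩ := (hb A hA).1
        have : i = j := by rw [← h2 x hx, hAj x hx]
        exact this ▸ h1
      · exfalso
        have e0 := Finset.card_pos.1 (by rw [h1 0 (by omega)]; exact Nat.one_pos)
        have e1 := Finset.card_pos.1 (by rw [h1 1 (by omega)]; exact Nat.one_pos)
        obtain ⟨x, hx⟩ := e0
        obtain ⟨y, hy⟩ := e1
        rw [Finset.mem_filter] at hx hy
        have := hAj x hx.1
        have := hAj y hy.1
        omega
    obtain ⟨xa, hxa, hamin⟩ := Finset.exists_min_image (edgeSupport E) c hSne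
    obtain ⟨xb, hxb, hbmax⟩ := Finset.exists_max_image (edgeSupport E) c hSne
    by_cases hab : c xa = c xb
    · refine ih (t + c xa * k ^ s) E fun A hA => hone A hA _ fun x hx => ?_
      have hxS := (hmem x).2 ⟨A, hA, hx⟩
      have := hamin x hxS
      have := hbmax x hxS
      omega
    have hlt : c xa < c xb := lt_of_le_of_ne (hamin xb hxb) hab
    have hbk := hck xb hxb
    set g : ℕ → ℕ := fun x => if c x ≤ c xa then 0 else if c xb ≤ c x then k - 1 else c x with hg
    have hgmono : ∀ x y, x ≤ y → g x ≤ g y := by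
      intro x y hxy
      have := hcmono hxy
      simp only [hg]
      split_ifs <;> omega
    have hginj : ∀ x ∈ edgeSupport E, ∀ y ∈ edgeSupport E, g x = g y → c x = c y := by
      intro x hx y hy hxy
      have := hamin x hx
      have := hamin y hy
      have := hbmax x hx
      have := hbmax y hy
      simp only [hg] at hxy
      split_ifs at hxy <;> omega
    have hgk : ∀ x, g x < k := by
      intro x
      simp only [hg]
      split_ifs <;> omega
    refine KNestable.nest E (by omega) (fun j => (edgeSupport E).filter fun x => g x = j)
      ?_ ?_ ?_ ?_ ?_ ?_ ?_
    · intro j j' hjj x hx y hy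
      rw [Finset.mem_filter] at hx hy
      by_contra hcon
      have := hgmono y x (by omega)
      have : (j : ℕ) < j' := hjj
      omega
    · ext x
      simp only [Finset.mem_biUnion, Finset.mem_univ, true_and, Finset.mem_filter]
      exact ⟨fun hx => ⟨⟨g x, hgk x⟩, hx, rfl⟩, fun ⟨_, hx, _⟩ => hx⟩
    · intro j x hx y hy z hz hxz hzy
      rw [Finset.mem_filter] at hx hy ⊢
      have := hgmono x z hxz
      have := hgmono z y hzy
      exact ⟨hz, by omega⟩
    · intro x hx
      have hga : g xa = 0 := by simp [hg]
      by_cases hle : xa ≤ x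
      · exact ⟨xa, Finset.mem_filter.2 ⟨hxa, hga⟩, hle⟩
      · have := hgmono x xa (by omega)
        exact ⟨x, Finset.mem_filter.2 ⟨hx, by simp only; omega⟩, le_rfl⟩
    · intro x hx
      have hgb : g xb = k - 1 := by
        simp only [hg]
        split_ifs <;> omega
      by_cases hle : x ≤ xb
      · exact ⟨xb, Finset.mem_filter.2 ⟨hxb, hgb⟩, hle⟩
      · have := hgmono xb x (by omega)
        have := hgk x
        exact ⟨x, Finset.mem_filter.2 ⟨hx, by simp only; omega⟩, le_rfl⟩
    · intro A hA
      rcases hdich A hA with ⟨i, hi, h1, h2⟩ | h1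
      · left
        obtain ⟨x0, hx0⟩ := (hb A hA).1
        refine ⟨⟨g x0, hgk x0⟩, fun x hx => Finset.mem_filter.2 ⟨(hmem x).2 ⟨A, hA, hx⟩, ?_⟩⟩
        have : c x = c x0 := by rw [h2 x hx, h2 x0 hx0]
        simp only [hg, this]
      · right
        obtain ⟨x, hx⟩ := Finset.card_pos.1 (by rw [h1 0 (by omega)]; exact Nat.one_pos)
        obtain ⟨y, hy⟩ := Finset.card_pos.1 (by rw [h1 (k - 1) (by omega)]; exact Nat.one_pos)
        rw [Finset.mem_filter] at hx hy
        have hx' := hamin x ((hmem x).2 ⟨A, hA, hx.1⟩)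
        have hy' := hbmax y ((hmem y).2 ⟨A, hA, hy.1⟩)
        intro j
        rw [← h1 j j.2]
        congr 1
        ext z
        simp only [Finset.mem_inter, Finset.mem_filter]
        have hgc : z ∈ edgeSupport E → g z = c z := by
          intro hz
          have := hck z hz
          simp only [hg]
          split_ifs <;> omega
        constructor
        · rintro ⟨hz, hzS, hzj⟩
          exact ⟨hz, by rw [← hgc hzS, hzj]⟩
        · rintro ⟨hz, hzj⟩
          have hzS := (hmem z).2 ⟨A, hA, hz⟩
          exact ⟨hz, hzS, by rw [hgc hzS, hzj]⟩
    · intro j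
      rcases ((edgeSupport E).filter fun x => g x = j).eq_empty_or_nonempty with he | ⟨x0, hx0⟩
      · refine ih t _ fun A hA => ?_
        rw [Finset.mem_filter] at hA
        obtain ⟨x, hx⟩ := (hb A hA.1).1
        have := hA.2 hx
        rw [he] at this
        simp at this
      · rw [Finset.mem_filter] at hx0
        refine ih (t + c x0 * k ^ s) _ fun A hA => ?_
        rw [Finset.mem_filter] at hA
        refine hone A hA.1 _ fun x hx => ?_
        have := Finset.mem_filter.1 (hA.2 hx)
        exact hginj x this.1 x0 hx0.1 (by rw [this.2, hx0.2])

/-- For `k ≥ 2` and `s ≥ 0`, any ordered `k`-uniform matching `M`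
with `e` edges on vertex set `{1, …, ke}` (which its edges partition) that is contained
in `G_s^k` is `k`-nestable. -/
theorem matching_in_iterGraph_nestable (k s e : ℕ) (hk : 2 ≤ k)
    (M : OrderedHypergraph) (hn : M.n = k * e) (hecard : M.edges.card = e)
    (huniform : ∀ A ∈ M.edges, A.card = k)
    (hdisj : ∀ A ∈ M.edges, ∀ B ∈ M.edges, A ≠ B → Disjoint A B)
    (hsupp : edgeSupport M.edges = Finset.Icc 1 (k * e))
    (hcont : (iterGraph k s).Contains M) :
    KNestable k M.edges := by
  obtain ⟨f, hf, -, hedge⟩ := hcont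
  exact nestable_of_shifted k hk f hf s 0 M.edges fun A hA =>
    shiftedEdge_of_mem k hk f hf s 0 A _ (hedge A hA) (by simp)
end
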